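/- Let p ∈ ℕ and let e : ℝ^p → V be a linear map such that B(e(v), e(v)) > 0 for every v ≠ 0. Then for every t ∈ [0,1] the linear map ρ_t ∘ e also satisfies B(ρ_t(e(v)), ρ_t(e(v))) > 0 for every v ≠ 0; in particular ρ_t ∘ e is injective for every t ∈ [0,1]. -/

import Mathlib

/-- The Picard–Lefschetz type linear map `ρ_t : α ↦ α + t·B(α,s)·s`. -/
noncomputable def rho {V : Type*} [AddCommGroup V] [Module ℝ V]
    (B : V →ₗ[ℝ] V →ₗ[ℝ] ℝ) (s : V) (t : ℝ) : V →ₗ[ℝ] V :=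
  LinearMap.id + (t • B.flip s).smulRight s

section Rho

variable {V : Type*} [AddCommGroup V] [Module ℝ V] {B : V →ₗ[ℝ] V →ₗ[ℝ] ℝ} {s x : V} {t : ℝ}

theorem rho_apply (B : V →ₗ[ℝ] V →ₗ[ℝ] ℝ) (s : V) (t : ℝ) (x : V) :
    rho B s t x = x + (t * B x s) • s := by
  simp [rho]

theorem apply_rho_self (hx : B s x = B x s) :
    B (rho B s t x) (rho B s t x) = B x x + t * (2 + t * B s s) * B x s ^ 2 := by
  simp only [rho_apply, map_add, map_smul, LinearMap.add_apply, LinearMap.smul_apply,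
    smul_eq_mul, hx]
  ring

theorem apply_self_le_apply_rho_self (hx : B s x = B x s) (ht : 0 ≤ t * (2 + t * B s s)) :
    B x x ≤ B (rho B s t x) (rho B s t x) := by
  rw [apply_rho_self hx]
  exact le_add_of_nonneg_right (mul_nonneg ht (sq_nonneg _))

end Rho

theorem injective_of_forall_apply_self_ne_zero {R V W : Type*} [CommSemiring R]
    [AddCommMonoid V] [Module R V] [AddCommGroup W] [Module R W]
    (B : V →ₗ[R] V →ₗ[R] R) (f : W →ₗ[R] V) (hf : ∀ w, w ≠ 0 → B (f w) (f w) ≠ 0) :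
    Function.Injective f := by
  refine (injective_iff_map_eq_zero f).2 fun w hw => ?_
  by_contra hne
  exact hf w hne (by rw [hw, map_zero])

theorem rho_comp_positive_embedding_general {V W : Type*} [AddCommGroup V] [Module ℝ V]
    [AddCommGroup W] [Module ℝ W] (B : V →ₗ[ℝ] V →ₗ[ℝ] ℝ) (s : V)
    (hB : ∀ x, B s x = B x s) (e : W →ₗ[ℝ] V) (he : ∀ w, w ≠ 0 → 0 < B (e w) (e w))
    (t : ℝ) (ht : 0 ≤ t * (2 + t * B s s)) :
    (∀ w, w ≠ 0 → 0 < B ((rho B s t ∘ₗ e) w) ((rho B s t ∘ₗ e) w)) ∧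
      Function.Injective (rho B s t ∘ₗ e) := by
  have hpos : ∀ w, w ≠ 0 → 0 < B ((rho B s t ∘ₗ e) w) ((rho B s t ∘ₗ e) w) := fun w hw =>
    (he w hw).trans_le (apply_self_le_apply_rho_self (hB (e w)) ht)
  exact ⟨hpos, injective_of_forall_apply_self_ne_zero B _ fun w hw => (hpos w hw).ne.symm⟩

/-- if `e : ℝ^p → V` is linear with `B(e v, e v) > 0` for all `v ≠ 0`,
then for every `t ∈ [0,1]` the map `ρ_t ∘ e` has the same positivity property;
in particular `ρ_t ∘ e` is injective for every `t ∈ [0,1]`. -/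
theorem rho_comp_positive_embedding {V : Type*} [AddCommGroup V] [Module ℝ V]
    (B : V →ₗ[ℝ] V →ₗ[ℝ] ℝ) (hB : ∀ x y : V, B x y = B y x)
    (s : V) (hs : B s s = -2)
    (p : ℕ) (e : (Fin p → ℝ) →ₗ[ℝ] V)
    (he : ∀ v : Fin p → ℝ, v ≠ 0 → 0 < B (e v) (e v)) :
    ∀ t ∈ Set.Icc (0 : ℝ) 1,
      (∀ v : Fin p → ℝ, v ≠ 0 →
        0 < B ((rho B s t ∘ₗ e) v) ((rho B s t ∘ₗ e) v)) ∧
      Function.Injective (rho B s t ∘ₗ e) := by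
  rintro t ⟨ht0, ht1⟩
  exact rho_comp_positive_embedding_general B s (hB s) e he t
    (mul_nonneg ht0 (by rw [hs]; linarith))
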